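/- Let U be a contractible open subset of ℂ and let X : U → Mat(2,ℂ) be a real analytic map such that X(z) ≠ 0 and det X(z) = 0 for all z ∈ U. Then there exists a real analytic map g : U → SL(2,ℂ) such that the matrix g(z) X(z) conj(g(z))ᵀ has identically vanishing second column on U. (The main step in the proof of Lemma 4.1, obtained by gluing local solutions via an upper-triangular cocycle.) -/

import Mathlib

open Matrix Complex
noncomputable section

/-- the monomial `h ^ m * conj h ^ (N - m)` as a multilinear map -/
def monoML (N m : ℕ) : ContinuousMultilinearMap ℝ (fun _ : Fin N => ℂ) ℂ :=
  (ContinuousMultilinearMap.mkPiAlgebra ℝ (Fin N) ℂ).compContinuousLinearMap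
    (fun k => if (k : ℕ) < m then ContinuousLinearMap.id ℝ ℂ else (conjCLE : ℂ →L[ℝ] ℂ))

lemma monoML_norm (N m : ℕ) : ‖monoML N m‖ ≤ 1 := by
  refine (ContinuousMultilinearMap.norm_compContinuousLinearMap_le _ _).trans ?_
  have h1 : ‖ContinuousMultilinearMap.mkPiAlgebra ℝ (Fin N) ℂ‖ ≤ 1 := by simp
  have h2 : ∏ k : Fin N, ‖(if (k : ℕ) < m then ContinuousLinearMap.id ℝ ℂ
      else (conjCLE : ℂ →L[ℝ] ℂ))‖ ≤ 1 := by
    apply Finset.prod_le_one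
    · intros; positivity
    · intro k _
      split_ifs
      · exact ContinuousLinearMap.norm_id_le
      · simp
  exact mul_le_one₀ h1 (by positivity) h2

lemma monoML_apply (m n : ℕ) (h : ℂ) :
    monoML (m + n) m (fun _ => h) = h ^ m * (starRingEnd ℂ h) ^ n := by
  simp only [monoML, ContinuousMultilinearMap.compContinuousLinearMap_apply,
    ContinuousMultilinearMap.mkPiAlgebra_apply]
  rw [Fin.prod_univ_add]
  simp

lemma analyticAt_monomials {ι : Type*} (c : ι → ℂ) (m n : ι → ℕ) (ρ : ℝ) (hρ : 0 < ρ)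
    (hs : Summable fun i => ‖c i‖ * ρ ^ (m i + n i)) (z₀ : ℂ) :
    AnalyticAt ℝ (fun z => ∑' i, c i * ((z - z₀) ^ m i * (starRingEnd ℂ (z - z₀)) ^ n i)) z₀ := by
  classical
  let T : ∀ N : ℕ, {i // m i + n i = N} → ContinuousMultilinearMap ℝ (fun _ : Fin N => ℂ) ℂ :=
    fun N i => c i • monoML N (m i)
  have hTn : ∀ N i, ‖T N i‖ ≤ ‖c i‖ := fun N i => by
    simp only [T]
    rw [norm_smul]
    exact mul_le_of_le_one_right (norm_nonneg _) (monoML_norm _ _)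
  have hs2 : ∀ N, Summable fun i : {i // m i + n i = N} => ‖c i‖ := fun N => by
    have := (hs.comp_injective (i := ((↑) : {i // m i + n i = N} → ι))
      Subtype.val_injective).mul_right (ρ ^ N)⁻¹
    refine this.congr fun i => ?_
    simp only [Function.comp, i.2]
    field_simp
  have hTs : ∀ N, Summable (T N) := fun N =>
    Summable.of_norm_bounded (hs2 N) (hTn N)
  let p : FormalMultilinearSeries ℝ ℂ ℂ := fun N => ∑' i, T N i
  let C := ∑' i, ‖c i‖ * ρ ^ (m i + n i)
  have hpn : ∀ N, ‖p N‖ * ρ ^ N ≤ C := fun N => by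
    have h1 : ‖p N‖ ≤ ∑' i : {i // m i + n i = N}, ‖c i‖ :=
      tsum_of_norm_bounded (hs2 N).hasSum (hTn N)
    calc ‖p N‖ * ρ ^ N ≤ (∑' i : {i // m i + n i = N}, ‖c i‖) * ρ ^ N := by gcongr
      _ = ∑' i : {i // m i + n i = N}, ‖c i‖ * ρ ^ (m i + n i) := by
        rw [← tsum_mul_right]
        exact tsum_congr fun i => by rw [i.2]
      _ ≤ C := Summable.tsum_subtype_le _ {i | m i + n i = N} (fun i => by positivity) hs
  have hf : HasFPowerSeriesOnBall
      (fun z => ∑' i, c i * ((z - z₀) ^ m i * (starRingEnd ℂ (z - z₀)) ^ n i)) p z₀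
      (ENNReal.ofReal ρ) := by
    refine ⟨?_, by simpa using hρ, ?_⟩
    · have := p.le_radius_of_bound (r := ⟨ρ, hρ.le⟩) C hpn
      convert this using 1
      exact ENNReal.ofReal_eq_coe_nnreal hρ.le
    · intro y hy
      have hy' : ‖y‖ ≤ ρ := by
        rw [Metric.eball_ofReal] at hy
        simpa using (mem_ball_zero_iff.1 hy).le
      have hsum : Summable fun i => c i * (y ^ m i * (starRingEnd ℂ y) ^ n i) := by
        refine Summable.of_norm_bounded hs fun i => ?_
        rw [norm_mul, norm_mul, norm_pow, norm_pow, RCLike.norm_conj, ← pow_add]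
        gcongr
      simp only [add_sub_cancel_left]
      have h2 := (Equiv.sigmaFiberEquiv (fun i => m i + n i)).hasSum_iff.2 hsum.hasSum
      refine h2.sigma fun N => ?_
      have h3 := ((hTs N).hasSum).mapL
        (ContinuousMultilinearMap.apply ℝ (fun _ : Fin N => ℂ) ℂ (fun _ => y))
      have h4 : (fun b : {i // m i + n i = N} => ((fun i => c i * (y ^ m i * (starRingEnd ℂ y) ^ n i)) ∘
          (Equiv.sigmaFiberEquiv fun i => m i + n i)) ⟨N, b⟩) =
          fun b => (ContinuousMultilinearMap.apply ℝ (fun _ : Fin N => ℂ) ℂ fun _ => y) (T N b) := by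
        funext ⟨i, hi⟩
        subst hi
        simp [T, monoML_apply]
      have h5 := h3
      rw [← h4] at h5
      exact h5
  exact hf.analyticAt

lemma hasSum_mul2 {𝕜 β γ : Type*} [NormedField 𝕜] [CompleteSpace 𝕜] {f : β → 𝕜} {k : γ → 𝕜}
    {y z : 𝕜} (hg : HasSum f y) (hh : HasSum k z)
    (nf : Summable fun n => ‖f n‖) (n2 : Summable fun t => ‖k t‖) :
    HasSum (fun t : β × γ => f t.1 * k t.2) (y * z) := by
  have := (Summable.mul_norm nf n2).of_norm
  exact HasSum.mul hg hh this

open NormedSpace in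
lemma hasSum_exp3 {𝕜 : Type*} [NormedField 𝕜] [NormedAlgebra ℚ 𝕜] [CompleteSpace 𝕜] (x y z : 𝕜) :
    HasSum (fun t : ℕ × ℕ × ℕ => x ^ t.1 / (t.1.factorial : 𝕜) * (y ^ t.2.1 / (t.2.1.factorial : 𝕜) *
      (z ^ t.2.2 / (t.2.2.factorial : 𝕜)))) (exp x * (exp y * exp z)) :=
by
  have n2 := Summable.mul_norm (norm_expSeries_div_summable y) (norm_expSeries_div_summable z)
  have s2 := hasSum_mul2 (expSeries_div_hasSum_exp y) (expSeries_div_hasSum_exp z)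
    (norm_expSeries_div_summable y) (norm_expSeries_div_summable z)
  have := hasSum_mul2 (k := fun t : ℕ × ℕ => (y ^ t.1 / (t.1.factorial : 𝕜) *
      (z ^ t.2 / (t.2.factorial : 𝕜)))) (expSeries_div_hasSum_exp x) s2
      (norm_expSeries_div_summable x) n2
  exact this

lemma analyticAt_gauss {α : Type*} (e : α → ℂ) (M : α → ℝ) (hM : ∀ a, 0 ≤ M a) (r : α → ℝ)
    (p : α → ℂ) (z₀ : ℂ) (ρ : ℝ) (hρ : 0 < ρ)
    (hs : Summable fun a => ‖e a‖ * Real.exp (M a * (r a ^ 2 - ‖z₀ - p a‖ ^ 2 + 2 * ‖z₀ - p a‖ * ρ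
      + ρ ^ 2))) :
    AnalyticAt ℝ (fun z => ∑' a, e a * (Real.exp (M a * (r a ^ 2 - ‖z - p a‖ ^ 2)) : ℂ)) z₀ := by
  let w : α → ℂ := fun a => z₀ - p a
  let K : α → ℝ := fun a => Real.exp (M a * (r a ^ 2 - ‖w a‖ ^ 2))
  let c : α × ℕ × ℕ × ℕ → ℂ := fun q =>
    (e q.1 * K q.1) * ((-M q.1 : ℂ) ^ q.2.1 / (q.2.1.factorial : ℂ) *
      ((-M q.1 * starRingEnd ℂ (w q.1) : ℂ) ^ q.2.2.1 / (q.2.2.1.factorial : ℂ) *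
      ((-M q.1 * w q.1 : ℂ) ^ q.2.2.2 / (q.2.2.2.factorial : ℂ))))
  let m : α × ℕ × ℕ × ℕ → ℕ := fun q => q.2.1 + q.2.2.1
  let n : α × ℕ × ℕ × ℕ → ℕ := fun q => q.2.1 + q.2.2.2
  have hsum : Summable fun q => ‖c q‖ * ρ ^ (m q + n q) := by
    have hfib : ∀ a, HasSum (fun t : ℕ × ℕ × ℕ => ‖c (a, t)‖ * ρ ^ (m (a, t) + n (a, t)))
        (‖e a‖ * Real.exp (M a * (r a ^ 2 - ‖z₀ - p a‖ ^ 2 + 2 * ‖z₀ - p a‖ * ρ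
      + ρ ^ 2))) := by
      intro a
      have h := (hasSum_exp3 (𝕜 := ℝ) (M a * ρ ^ 2) (M a * ‖w a‖ * ρ) (M a * ‖w a‖ * ρ)).mul_left
        (‖e a‖ * K a)
      rw [← Real.exp_eq_exp_ℝ, ← Real.exp_add, ← Real.exp_add, mul_assoc ‖e a‖ (K a) (Real.exp _), ← Real.exp_add] at h
      have e2 : M a * (r a ^ 2 - ‖z₀ - p a‖ ^ 2 + 2 * ‖z₀ - p a‖ * ρ + ρ ^ 2) =
          M a * (r a ^ 2 - ‖w a‖ ^ 2) + (M a * ρ ^ 2 + (M a * ‖w a‖ * ρ + M a * ‖w a‖ * ρ)) := by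
        simp only [w]
        ring
      rw [e2]
      have e1 : ∀ t : ℕ × ℕ × ℕ, ‖c (a, t)‖ * ρ ^ (m (a, t) + n (a, t)) =
          ‖e a‖ * K a * ((M a * ρ ^ 2) ^ t.1 / (t.1.factorial : ℝ) *
          ((M a * ‖w a‖ * ρ) ^ t.2.1 / (t.2.1.factorial : ℝ) *
          ((M a * ‖w a‖ * ρ) ^ t.2.2 / (t.2.2.factorial : ℝ)))) := by
        intro t
        have hK : 0 ≤ K a := (Real.exp_pos _).le
        simp only [c, m, n, norm_mul, norm_div, norm_pow, norm_neg, Complex.norm_real,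
          Real.norm_of_nonneg (hM a), RCLike.norm_conj, Real.norm_of_nonneg hK, Complex.norm_natCast]
        ring
      simp only [e1]
      exact h
    rw [summable_prod_of_nonneg (fun q => by positivity)]
    refine ⟨fun a => (hfib a).summable, ?_⟩
    simpa only [(hfib _).tsum_eq] using hs
  refine (analyticAt_monomials c m n ρ hρ hsum z₀).congr ?_
  filter_upwards [Metric.ball_mem_nhds z₀ hρ] with z hz
  have hz' : ‖z - z₀‖ ≤ ρ := by rw [← dist_eq_norm]; exact (Metric.mem_ball.1 hz).le
  have hS : Summable fun q => c q * ((z - z₀) ^ m q * (starRingEnd ℂ (z - z₀)) ^ n q) := by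
    refine Summable.of_norm_bounded hsum fun i => ?_
    rw [norm_mul (c i), norm_mul (_ ^ _), norm_pow, norm_pow, RCLike.norm_conj, ← pow_add]
    gcongr
  rw [hS.tsum_prod]
  refine tsum_congr fun a => ?_
  set h := z - z₀ with hh
  have h1 := (hasSum_exp3 (𝕜 := ℂ) (-M a * (h * starRingEnd ℂ h)) (-M a * starRingEnd ℂ (w a) * h)
    (-M a * w a * starRingEnd ℂ h)).mul_left (e a * K a)
  have h2 : (fun t : ℕ × ℕ × ℕ => c (a, t) * (h ^ m (a, t) * (starRingEnd ℂ h) ^ n (a, t))) =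
      (fun t : ℕ × ℕ × ℕ => e a * K a * ((-M a * (h * starRingEnd ℂ h)) ^ t.1 /
      (t.1.factorial : ℂ) * ((-M a * starRingEnd ℂ (w a) * h) ^ t.2.1 / (t.2.1.factorial : ℂ) *
      ((-M a * w a * starRingEnd ℂ h) ^ t.2.2 / (t.2.2.factorial : ℂ))))) := by
    funext t
    simp only [c, m, n]
    ring
  rw [h2, h1.tsum_eq, ← Complex.exp_eq_exp_ℂ, ← Complex.exp_add, ← Complex.exp_add, mul_assoc]
  simp only [K]
  rw [Complex.ofReal_exp, Complex.ofReal_exp, ← Complex.exp_add]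
  congr 2
  have h3 : z - p a = w a + h := by simp only [w, hh]; ring
  rw [h3]
  push_cast
  rw [← Complex.mul_conj', ← Complex.mul_conj', map_add]
  ring

open Topology in
lemma exists_cover (U : Set ℂ) (hU : IsOpen U) (Q : U → U → Prop)
    (hQ : ∀ x : U, ∀ᶠ y in 𝓝 x, Q x y) :
    ∃ (α : Type) (c : α → U) (r : α → ℝ), Countable α ∧ (∀ a, 0 < r a) ∧
      (∀ a y, dist y (c a) < 2 * r a → Q (c a) y) ∧
      (∀ y : U, ∃ a, dist y (c a) < r a) ∧
      ∀ z₀ ∈ U, ∃ R > 0, {a | ¬ (2 * r a ≤ ‖z₀ - c a‖ ∧ R ≤ ‖z₀ - c a‖)}.Finite := by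
  have : LocallyCompactSpace U := hU.locallyCompactSpace
  let pr : U → ℝ → Prop := fun x r => 0 < r ∧ (r ≤ 1 ∧ Metric.ball (x : ℂ) (2 * r) ⊆ U ∧
      ∀ y : U, dist y x < 2 * r → Q x y)
  have hB : ∀ x : U, (𝓝 x).HasBasis (pr x) (fun r => Metric.ball x r) := by
    intro x
    refine Metric.nhds_basis_ball.restrict ?_
    intro r hr
    obtain ⟨d, hd, hd'⟩ := Metric.isOpen_iff.1 hU x x.2
    obtain ⟨d2, hd2, hd2'⟩ := Metric.eventually_nhds_iff.1 (hQ x)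
    let m := min (min r 1) (min (d/2) (d2/2))
    have m1 : m ≤ r := (min_le_left _ _).trans (min_le_left _ _)
    have m2 : m ≤ 1 := (min_le_left _ _).trans (min_le_right _ _)
    have m3 : m ≤ d/2 := (min_le_right _ _).trans (min_le_left _ _)
    have m4 : m ≤ d2/2 := (min_le_right _ _).trans (min_le_right _ _)
    refine ⟨m, by positivity, ⟨m2, ?_, ?_⟩, Metric.ball_subset_ball m1⟩
    · exact (Metric.ball_subset_ball (by linarith)).trans hd'
    · intro y hy; exact hd2' (by linarith)
  obtain ⟨α, c, r, hp, hcov, hlf⟩ := refinement_of_locallyCompact_sigmaCompact_of_nhds_basis hB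
  refine ⟨α, c, r, ?_, fun a => (hp a).1, fun a y h => (hp a).2.2.2 y h, ?_, ?_⟩
  · have := hlf.countable_univ (fun a => ⟨c a, Metric.mem_ball_self (hp a).1⟩)
    exact Set.countable_univ_iff.1 this
  · intro y
    have : y ∈ ⋃ a, Metric.ball (c a) (r a) := hcov ▸ Set.mem_univ y
    simpa using this
  · intro z₀ hz₀
    obtain ⟨d, hd, hd'⟩ := Metric.isOpen_iff.1 hU z₀ hz₀
    let R := d / 2
    have hR : 0 < R := by positivity
    let K : Set ℂ := Metric.closedBall z₀ R ∪
      (Metric.closedBall z₀ 2 ∩ ⋂ y ∈ Uᶜ, {c | R ≤ dist y c})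
    have hK : IsCompact K := by
      refine (isCompact_closedBall _ _).union ((isCompact_closedBall _ _).inter_right ?_)
      refine isClosed_biInter fun y _ => ?_
      exact isClosed_le continuous_const (by fun_prop)
    have hKU : K ⊆ U := by
      rintro x (hx | hx)
      · exact hd' (Metric.closedBall_subset_ball (by simp only [R]; linarith) hx)
      · by_contra h
        have := Set.mem_iInter₂.1 hx.2 x h
        simp at this
        linarith
    have hK' : IsCompact ((↑) ⁻¹' K : Set U) :=
      Topology.IsInducing.subtypeVal.isCompact_preimage_iff (by simpa using hKU) |>.2 hK
    refine ⟨R, hR, (hlf.finite_nonempty_inter_compact hK').subset ?_⟩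
    intro a ha
    refine ⟨c a, Metric.mem_ball_self (hp a).1, ?_⟩
    obtain ⟨h0, h1, h2, -⟩ := hp a
    by_cases hc : ‖z₀ - c a‖ < R
    · left
      rw [Metric.mem_closedBall, dist_comm, dist_eq_norm]; exact hc.le
    · right
      have hc' : R ≤ ‖z₀ - c a‖ := not_lt.1 hc
      have h3 : ‖z₀ - c a‖ < 2 * r a := by
        by_contra h; exact ha ⟨not_lt.1 h, hc'⟩
      refine ⟨?_, Set.mem_iInter₂.2 fun y hy => ?_⟩
      · rw [Metric.mem_closedBall, dist_comm, dist_eq_norm]; linarith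
      · by_contra h
        simp only [Set.mem_ofPred_eq, not_le] at h
        exact hy (h2 (by rw [Metric.mem_ball]; linarith))

open Topology in
lemma exists_analytic_approx (U : Set ℂ) (hU : IsOpen U) (s0 s1 : U → ℂ) (h0 : Continuous s0)
    (h1 : Continuous s1) (hs : ∀ x, ‖s0 x‖ ^ 2 + ‖s1 x‖ ^ 2 = 1) :
    ∃ w0 w1 : ℂ → ℂ, AnalyticOnNhd ℝ w0 U ∧ AnalyticOnNhd ℝ w1 U ∧
      ∀ x : U, 0 < (starRingEnd ℂ (s0 x) * w0 x + starRingEnd ℂ (s1 x) * w1 x).re := by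
  let ip : U → U → ℝ := fun y x =>
    (starRingEnd ℂ (s0 y) * s0 x + starRingEnd ℂ (s1 y) * s1 x).re
  have hip1 : ∀ x, ip x x = 1 := fun x => by
    simp only [ip]
    rw [Complex.conj_mul', Complex.conj_mul', ← hs x]
    norm_cast
  have hipm : ∀ x y, -1 ≤ ip x y := fun x y => by
    have a := hs x
    have b := hs y
    simp only [ip, Complex.sq_norm, Complex.normSq_apply] at a b ⊢
    simp
    nlinarith [sq_nonneg ((s0 x).re + (s0 y).re), sq_nonneg ((s0 x).im + (s0 y).im),
      sq_nonneg ((s1 x).re + (s1 y).re), sq_nonneg ((s1 x).im + (s1 y).im)]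
  have hipM : ∀ x, ∀ᶠ y in 𝓝 x, 1/2 < ip y x := fun x => by
    have : Continuous fun y => ip y x := by simp only [ip]; fun_prop
    refine this.continuousAt.eventually_const_lt ?_
    simp only [hip1]; norm_num
  obtain ⟨α, c, r, hα, hr, hnear, hcov, hfin⟩ := exists_cover U hU (fun x y => 1/2 < ip y x) hipM
  classical
  have := Encodable.ofCountable α
  obtain ⟨ε, hε, C, hεC, hC⟩ := posSumOfEncodable (show (0:ℝ) < 1/4 by norm_num) α
  let M : α → ℝ := fun a => 1 / (ε a * r a ^ 2)
  have hM : ∀ a, 0 < M a := fun a => by have := hε a; have := hr a; positivity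
  have hMr : ∀ a, Real.exp (- (M a * r a ^ 2)) ≤ ε a := fun a => by
    have h2 := hε a
    have h3 := hr a
    have : M a * r a ^ 2 = 1 / ε a := by simp only [M]; field_simp
    rw [this, Real.exp_neg, inv_le_comm₀ (Real.exp_pos _) h2]
    have := Real.add_one_le_exp (1 / ε a)
    rw [← one_div]; linarith
  let φ : α → ℂ → ℝ := fun a z => Real.exp (M a * (r a ^ 2 - ‖z - c a‖ ^ 2))
  have hφfar : ∀ a (z : ℂ), 2 * r a ≤ ‖z - (c a : ℂ)‖ → φ a z ≤ ε a := fun a z h => by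
    refine le_trans (Real.exp_le_exp.2 ?_) (hMr a)
    have h3 := hr a
    have : 4 * r a ^ 2 ≤ ‖z - c a‖ ^ 2 := by nlinarith
    have := hM a
    nlinarith
  have han : ∀ e : α → ℂ, (∀ a, ‖e a‖ ≤ 1) →
      AnalyticOnNhd ℝ (fun z => ∑' a, e a * (φ a z : ℂ)) U := by
    intro e he z₀ hz₀
    obtain ⟨R, hR, hf⟩ := hfin z₀ hz₀
    refine analyticAt_gauss e M (fun a => (hM a).le) r (fun a => c a) z₀ (R/8) (by positivity) ?_
    refine Summable.of_norm_bounded_eventually hεC.summable ?_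
    rw [Filter.eventually_cofinite]
    refine hf.subset ?_
    intro a ha hgood
    apply ha
    rw [Real.norm_of_nonneg (by positivity)]
    refine (mul_le_of_le_one_left (Real.exp_pos _).le (he a)).trans
      (le_trans (Real.exp_le_exp.2 ?_) (hMr a))
    obtain ⟨g1, g2⟩ := hgood
    set t := ‖z₀ - c a‖
    have h3 := hr a
    have h4 : 4 * r a ^ 2 ≤ t ^ 2 := by nlinarith
    have h5 : R ^ 2 ≤ t ^ 2 := by nlinarith
    have h6 : t * R ≤ t ^ 2 := by nlinarith
    have h7 : r a ^ 2 - t ^ 2 + 2 * t * (R / 8) + (R / 8) ^ 2 ≤ - r a ^ 2 := by nlinarith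
    have := mul_le_mul_of_nonneg_left h7 (hM a).le
    linarith
  have hsφ : ∀ z ∈ U, Summable fun a => φ a z := by
    intro z₀ hz₀
    obtain ⟨R, hR, hf⟩ := hfin z₀ hz₀
    refine Summable.of_norm_bounded_eventually hεC.summable ?_
    rw [Filter.eventually_cofinite]
    refine hf.subset ?_
    intro a ha hgood
    apply ha
    rw [Real.norm_of_nonneg (Real.exp_pos _).le]
    exact hφfar a z₀ hgood.1
  have hs0 : ∀ x, ‖s0 x‖ ≤ 1 := fun x => by
    have := hs x; nlinarith [sq_nonneg ‖s1 x‖, norm_nonneg (s0 x)]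
  have hs1 : ∀ x, ‖s1 x‖ ≤ 1 := fun x => by
    have := hs x; nlinarith [sq_nonneg ‖s0 x‖, norm_nonneg (s1 x)]
  refine ⟨fun z => ∑' a, s0 (c a) * (φ a z : ℂ), fun z => ∑' a, s1 (c a) * (φ a z : ℂ),
    han _ fun a => hs0 _, han _ fun a => hs1 _, fun x => ?_⟩
  have hsum : ∀ e : α → ℂ, (∀ a, ‖e a‖ ≤ 1) → Summable fun a => e a * (φ a x : ℂ) := by
    intro e he
    refine Summable.of_norm_bounded (hsφ x x.2) fun a => ?_
    rw [norm_mul, Complex.norm_real, Real.norm_of_nonneg (Real.exp_pos _).le]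
    exact mul_le_of_le_one_left (Real.exp_pos _).le (he a)
  have S0 := (hsum (fun a => s0 (c a)) fun a => hs0 _).hasSum.mul_left (starRingEnd ℂ (s0 x))
  have S1 := (hsum (fun a => s1 (c a)) fun a => hs1 _).hasSum.mul_left (starRingEnd ℂ (s1 x))
  have S2 := Complex.hasSum_re (S0.add S1)
  obtain ⟨a0, ha0⟩ := hcov x
  have hlow : ∀ a, (if a = a0 then (1/2 : ℝ) else 0) - ε a ≤
      (starRingEnd ℂ (s0 x) * (s0 (c a) * (φ a x : ℂ)) +
        starRingEnd ℂ (s1 x) * (s1 (c a) * (φ a x : ℂ))).re := by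
    intro a
    have e1 : (starRingEnd ℂ (s0 x) * (s0 (c a) * (φ a x : ℂ)) +
        starRingEnd ℂ (s1 x) * (s1 (c a) * (φ a x : ℂ))).re = ip x (c a) * φ a x := by
      rw [← mul_assoc, ← mul_assoc, ← add_mul, Complex.re_mul_ofReal]
    rw [e1]
    have hφ : 0 < φ a x := Real.exp_pos _
    have hεa := hε a
    have hd : dist x (c a) = ‖(x : ℂ) - c a‖ := by rw [Subtype.dist_eq, dist_eq_norm]
    by_cases hn : dist x (c a) < 2 * r a
    · have h2 := hnear a x hn
      split_ifs with h
      · subst h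
        have : 1 ≤ φ a x := by
          apply Real.one_le_exp
          have h3 := hr a
          have := hM a
          rw [hd] at ha0
          have : ‖(x:ℂ) - c a‖ ^ 2 ≤ r a ^ 2 := by
            have := norm_nonneg ((x:ℂ) - c a)
            nlinarith
          apply mul_nonneg (hM a).le; linarith
        nlinarith
      · nlinarith
    · have hne : a ≠ a0 := by
        rintro rfl
        have := hr a
        linarith
      rw [if_neg hne]
      have h3 := hφfar a x (by rw [← hd]; exact not_lt.1 hn)
      have := hipm x (c a)
      nlinarith
  have S3 := (hasSum_ite_eq a0 (1/2 : ℝ)).sub hεC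
  have := hasSum_le hlow S3 S2
  linarith


open Filter Topology in
lemma exists_cont_section {Y E : Type*} [MetricSpace Y] [ContractibleSpace Y]
    [NormedAddCommGroup E] [NormedSpace ℂ E]
    (P : Y → (E →L[ℂ] E)) (hP : Continuous P) (hPP : ∀ x v, P x (P x v) = P x v)
    (hP0 : ∀ x, ∃ v, P x v ≠ 0) :
    ∃ s : Y → E, Continuous s ∧ (∀ x, s x ≠ 0) ∧ ∀ x, P x (s x) = s x := by
  obtain ⟨x₀, ⟨H⟩⟩ := id_nullhomotopic Y
  let Γ : C(Y × unitInterval, E →L[ℂ] E) :=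
    ⟨fun q => P (H (unitInterval.symm q.2, q.1)), by fun_prop⟩
  have hΓ0 : ∀ z, Γ (z, 0) = P x₀ := fun z => by simp [Γ]
  have hΓ1 : ∀ z, Γ (z, 1) = P z := fun z => by simp [Γ]
  have hΓΓ : ∀ q v, Γ q (Γ q v) = Γ q v := fun q v => hPP _ v
  let Γ' : C(Y, C(unitInterval, E →L[ℂ] E)) := Γ.curry
  let S : Y → Set ℝ := fun z => {δ | 0 < δ ∧ ∀ t t' : unitInterval, dist t t' ≤ δ →
    ‖Γ (z, t) - Γ (z, t')‖ < 1}
  have hS : ∀ z, Convex ℝ (S z) := by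
    intro z
    refine Set.OrdConnected.convex ⟨fun a ha b hb c hc => ⟨ha.1.trans_le hc.1, fun t t' h => hb.2 t t' (h.trans hc.2)⟩⟩
  obtain ⟨δ, hδ⟩ := exists_continuous_forall_mem_convex_of_local_const hS (by
    intro z
    have hu := CompactSpace.uniformContinuous_of_continuous (Γ' z).continuous
    obtain ⟨d, hd, hd'⟩ := Metric.uniformContinuous_iff.1 hu (1/3) (by norm_num)
    refine ⟨d / 2, ?_⟩
    have := (Metric.tendsto_nhds (f := 𝓝 z) (u := fun y => Γ' y) (a := Γ' z)).1
      (Γ'.continuous.tendsto z) (1/3) (by norm_num)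
    filter_upwards [this] with y hy
    refine ⟨by positivity, fun t t' h => ?_⟩
    have h1 := hd' (h.trans_lt (by linarith))
    have hy : dist (Γ' y) (Γ' z) < 1/3 := hy
    have h2 := (ContinuousMap.dist_apply_le_dist (f := Γ' y) (g := Γ' z) t)
    have h3 := (ContinuousMap.dist_apply_le_dist (f := Γ' y) (g := Γ' z) t')
    have h4 := dist_triangle4 (Γ' y t) (Γ' z t) (Γ' z t') (Γ' y t')
    rw [dist_comm (Γ' z t')] at h4
    rw [← dist_eq_norm]
    change dist (Γ' y t) (Γ' y t') < 1
    linarith)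
  obtain ⟨v0, hv0⟩ := hP0 x₀
  let τ : ℕ → Y → unitInterval := fun k z => Set.projIcc (0:ℝ) 1 zero_le_one (k * δ z)
  have hτ : ∀ k, Continuous (τ k) := fun k => by
    apply continuous_projIcc.comp; fun_prop
  let v : ℕ → Y → E := fun k z => Nat.rec (P x₀ v0) (fun k w => Γ (z, τ (k+1) z) w) k
  have hvs : ∀ k z, v (k+1) z = Γ (z, τ (k+1) z) (v k z) := fun k z => rfl
  have hvc : ∀ k, Continuous (v k) := by
    intro k
    induction k with
    | zero => exact continuous_const
    | succ k ih =>
      have : Continuous fun z => Γ (z, τ (k+1) z) := by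
        have := hτ (k+1); fun_prop
      exact this.clm_apply ih
  have hvP : ∀ k z, Γ (z, τ k z) (v k z) = v k z := by
    intro k z
    cases k with
    | zero =>
      have : τ 0 z = 0 := by simp [τ]
      rw [this, hΓ0]; exact hPP _ _
    | succ k => rw [hvs, hΓΓ]
  have hv0' : ∀ k z, v k z ≠ 0 := by
    intro k z
    induction k with
    | zero => exact hv0
    | succ k ih =>
      intro h0
      have hd : dist (τ (k+1) z) (τ k z) ≤ δ z := by
        have := (hδ z).1
        rw [Subtype.dist_eq, Real.dist_eq]
        have h := Set.abs_projIcc_sub_projIcc (a := (0:ℝ)) (b := 1) (c := ((k+1:ℕ):ℝ) * δ z) (d := k * δ z) zero_le_one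
        refine h.trans ?_
        push_cast
        rw [show ((k:ℝ)+1) * δ z - k * δ z = δ z by ring, abs_of_pos this]
      have h1 := (hδ z).2 _ _ hd
      have h2 : (Γ (z, τ (k+1) z) - Γ (z, τ k z)) (v k z) = - v k z := by
        rw [_root_.sub_apply, hvP, ← hvs, h0, zero_sub]
      have h3 := (Γ (z, τ (k+1) z) - Γ (z, τ k z)).le_opNorm (v k z)
      rw [h2, norm_neg] at h3
      have : 0 < ‖v k z‖ := norm_pos_iff.2 ih
      nlinarith
  have hτ1 : ∀ (k : ℕ) z, 1 ≤ k * δ z → τ k z = 1 := fun k z h => Set.projIcc_of_right_le _ h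
  have hstab : ∀ z (k l : ℕ), 1 ≤ k * δ z → k ≤ l → v l z = v k z := by
    intro z k l hk hkl
    induction l, hkl using Nat.le_induction with
    | base => rfl
    | succ l hl ih =>
      have hp := (hδ z).1
      have hl1 : 1 ≤ l * δ z := hk.trans (by gcongr)
      have hl2 : 1 ≤ ((l+1 : ℕ):ℝ) * δ z := hl1.trans (by gcongr; simp)
      rw [hvs, hτ1 _ _ hl2, ← hτ1 _ _ hl1, hvP, ih]
  let N : Y → ℕ := fun z => ⌈1 / δ z⌉₊
  have hN : ∀ z, 1 ≤ (N z) * δ z := fun z => by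
    have hp := (hδ z).1
    rw [← div_le_iff₀ hp]; exact Nat.le_ceil _
  refine ⟨fun z => v (N z) z, ?_, fun z => hv0' _ _, fun z => ?_⟩
  · rw [continuous_iff_continuousAt]
    intro z
    let M := N z + 1
    have hM : 1 < M * δ z := by
      have := hN z; have hp := (hδ z).1
      simp only [M]; push_cast; nlinarith
    have hev : ∀ᶠ y in 𝓝 z, 1 < M * δ y :=
      (show Continuous fun y => (M:ℝ) * δ y by fun_prop).continuousAt.eventually_const_lt hM
    refine (hvc M).continuousAt.congr ?_
    filter_upwards [hev] with y hy
    refine hstab y (N y) M (hN y) (Nat.ceil_le.2 ?_)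
    rw [div_le_iff₀ (hδ y).1]; exact hy.le
  · have := hvP (N z) z
    rwa [hτ1 _ _ (hN z), hΓ1] at this

theorem stmt11 (U : Set ℂ) (hUo : IsOpen U) (hUc : ContractibleSpace U)
    (X : ℂ → Matrix (Fin 2) (Fin 2) ℂ)
    (hX_an : ∀ i j, AnalyticOn ℝ (fun z => X z i j) U)
    (hX_ne : ∀ z ∈ U, X z ≠ 0)
    (hX_det : ∀ z ∈ U, (X z).det = 0) :
    ∃ g : ℂ → Matrix (Fin 2) (Fin 2) ℂ,
      (∀ i j, AnalyticOn ℝ (fun z => g z i j) U) ∧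
      (∀ z ∈ U, (g z).det = 1) ∧
      (∀ z ∈ U, ∀ i, (g z * X z * (g z)ᴴ) i 1 = 0) := by
  have conj_an : ∀ f : ℂ → ℂ, AnalyticOn ℝ f U → AnalyticOn ℝ (fun z => starRingEnd ℂ (f z)) U :=
    fun f hf => (conjCLE : ℂ →L[ℝ] ℂ).comp_analyticOn hf
  let Q : ℂ → Matrix (Fin 2) (Fin 2) ℂ := fun z => (X z).adjugate * ((X z).adjugate)ᴴ
  have hQH : ∀ z, (Q z)ᴴ = Q z := fun z => by simp [Q]
  have hXQ : ∀ z ∈ U, X z * Q z = 0 := fun z hz => by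
    simp only [Q]
    rw [← Matrix.mul_assoc, Matrix.mul_adjugate, hX_det z hz]; simp
  let τ : ℂ → ℝ := fun z => ‖X z 0 0‖ ^ 2 + ‖X z 0 1‖ ^ 2 + ‖X z 1 0‖ ^ 2 + ‖X z 1 1‖ ^ 2
  have hτ : ∀ z ∈ U, 0 < τ z := fun z hz => by
    by_contra h
    apply hX_ne z hz
    simp only [τ] at h
    have h00 := sq_nonneg ‖X z 0 0‖
    have h01 := sq_nonneg ‖X z 0 1‖
    have h10 := sq_nonneg ‖X z 1 0‖
    have h11 := sq_nonneg ‖X z 1 1‖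
    have e00 : ‖X z 0 0‖ ^ 2 = 0 := by linarith
    have e01 : ‖X z 0 1‖ ^ 2 = 0 := by linarith
    have e10 : ‖X z 1 0‖ ^ 2 = 0 := by linarith
    have e11 : ‖X z 1 1‖ ^ 2 = 0 := by linarith
    simp at e00 e01 e10 e11
    ext i j
    fin_cases i <;> fin_cases j <;> simpa
  have hτQ : ∀ z, (τ z : ℂ) = X z 0 0 * starRingEnd ℂ (X z 0 0) + X z 0 1 * starRingEnd ℂ (X z 0 1)
      + X z 1 0 * starRingEnd ℂ (X z 1 0) + X z 1 1 * starRingEnd ℂ (X z 1 1) := fun z => by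
    simp only [Complex.mul_conj', τ]; push_cast; rfl
  have hQe : ∀ z, Q z = !![X z 1 1 * starRingEnd ℂ (X z 1 1) + X z 0 1 * starRingEnd ℂ (X z 0 1),
      -(X z 1 1 * starRingEnd ℂ (X z 1 0) + X z 0 1 * starRingEnd ℂ (X z 0 0));
      -(X z 1 0 * starRingEnd ℂ (X z 1 1) + X z 0 0 * starRingEnd ℂ (X z 0 1)),
      X z 1 0 * starRingEnd ℂ (X z 1 0) + X z 0 0 * starRingEnd ℂ (X z 0 0)] := fun z => by
    simp only [Q, Matrix.adjugate_fin_two]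
    ext i j
    fin_cases i <;> fin_cases j <;> simp [Matrix.mul_apply, Fin.sum_univ_two] <;> ring
  have hQQ : ∀ z ∈ U, Q z * Q z = (τ z : ℂ) • Q z := fun z hz => by
    have hd := hX_det z hz
    have hd' := congrArg (starRingEnd ℂ) hd
    rw [Matrix.det_fin_two] at hd hd'
    simp only [map_sub, map_mul, map_zero] at hd'
    rw [hτQ, hQe]
    ext i j
    fin_cases i <;> fin_cases j <;> simp [Matrix.mul_apply, Fin.sum_univ_two]
    · linear_combination (-(starRingEnd ℂ (X z 0 0) * starRingEnd ℂ (X z 1 1) -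
        starRingEnd ℂ (X z 0 1) * starRingEnd ℂ (X z 1 0))) * hd
    · ring
    · ring
    · linear_combination (-(starRingEnd ℂ (X z 0 0) * starRingEnd ℂ (X z 1 1) -
        starRingEnd ℂ (X z 0 1) * starRingEnd ℂ (X z 1 0))) * hd
  have hQan : ∀ i j, AnalyticOn ℝ (fun z => Q z i j) U := by
    intro i j
    have c := fun i j => conj_an _ (hX_an i j)
    have mm := fun i j k l => (hX_an i j).mul (c k l)
    simp only [hQe]
    fin_cases i <;> fin_cases j <;> simp
    · exact (mm 1 1 1 1).add (mm 0 1 0 1)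
    · exact ((mm 0 1 0 0).neg).add (mm 1 1 1 0).neg
    · exact ((mm 0 0 0 1).neg).add (mm 1 0 1 1).neg
    · exact (mm 1 0 1 0).add (mm 0 0 0 0)
  -- continuous section
  have hXc : ∀ i j, Continuous fun z : U => X z i j := fun i j =>
    (hX_an i j).continuousOn.domRestrict
  have hQc : Continuous fun z : U => Q z := by
    refine continuous_matrix fun i j => (hQan i j).continuousOn.domRestrict
  have hτc : Continuous fun z : U => τ z := by
    exact ((((hXc 0 0).norm.pow 2).add ((hXc 0 1).norm.pow 2)).add ((hXc 1 0).norm.pow 2)).add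
      ((hXc 1 1).norm.pow 2)
  let L : Matrix (Fin 2) (Fin 2) ℂ →ₗ[ℂ] ((Fin 2 → ℂ) →L[ℂ] (Fin 2 → ℂ)) :=
    (LinearMap.toContinuousLinearMap.toLinearMap).comp (Matrix.toLin').toLinearMap
  have hL : ∀ A v, L A v = A *ᵥ v := fun A v => by simp [L]
  obtain ⟨s, hsc, hs0, hsP⟩ := exists_cont_section (Y := U)
    (fun z => L (((τ z)⁻¹ : ℂ) • Q z))
    (by
      refine L.continuous_of_finiteDimensional.comp ?_
      refine Continuous.smul (f := fun z : U => ((τ z : ℂ))⁻¹) (g := fun z : U => Q z) ?_ hQc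
      exact (Complex.continuous_ofReal.comp hτc).inv₀ fun z => by
        simpa using (hτ z z.2).ne')
    (by
      intro z v
      have := (hτ z z.2).ne'
      rw [hL, hL, Matrix.mulVec_mulVec, smul_mul_smul_comm, hQQ z z.2, smul_smul]
      congr 2
      field_simp)
    (by
      intro z
      by_contra! h
      have h1 : ((τ z)⁻¹ : ℂ) • Q z = 0 := by
        ext i j
        have h0 := congrFun (h (Pi.single j 1)) i
        rw [hL] at h0
        simpa using h0
      have h2 : ((τ z : ℂ)⁻¹) ≠ 0 := by simpa using (hτ z z.2).ne'
      have h3 : Q z = 0 := (smul_eq_zero.1 h1).resolve_left h2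
      have h4 : (τ z : ℂ) = Q z 0 0 + Q z 1 1 := by
        rw [hτQ, hQe]; simp; ring
      rw [h3] at h4
      simp at h4
      exact (hτ z z.2).ne' h4)
  simp only [hL] at hsP
  have hQs : ∀ z : U, Q z *ᵥ s z = (τ z : ℂ) • s z := fun z => by
    have := (hτ z z.2).ne'
    have h := congrArg ((τ z : ℂ) • ·) (hsP z)
    simp only [Matrix.smul_mulVec, smul_smul] at h
    rw [mul_inv_cancel₀ (by simpa using this), one_smul] at h
    exact h
  let nn : U → ℝ := fun z => Real.sqrt (‖s z 0‖ ^ 2 + ‖s z 1‖ ^ 2)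
  have hnn2 : ∀ z, 0 < ‖s z 0‖ ^ 2 + ‖s z 1‖ ^ 2 := fun z => by
    by_contra h
    apply hs0 z
    have h00 := sq_nonneg ‖s z 0‖
    have h01 := sq_nonneg ‖s z 1‖
    have e00 : ‖s z 0‖ ^ 2 = 0 := by linarith
    have e01 : ‖s z 1‖ ^ 2 = 0 := by linarith
    simp at e00 e01
    ext i
    fin_cases i <;> simpa
  have hnn : ∀ z, 0 < nn z := fun z => Real.sqrt_pos.2 (hnn2 z)
  have hsc0 : Continuous fun z => s z 0 := (continuous_apply 0).comp hsc
  have hsc1 : Continuous fun z => s z 1 := (continuous_apply 1).comp hsc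
  have hnnc : Continuous fun z => (nn z : ℂ) := by
    simp only [nn]; fun_prop
  have hnn0 : ∀ z, (nn z : ℂ) ≠ 0 := fun z => by simpa using (hnn z).ne'
  obtain ⟨w0, w1, hw0, hw1, hw⟩ := exists_analytic_approx U hUo (fun z => s z 0 / nn z)
    (fun z => s z 1 / nn z) (hsc0.div hnnc hnn0) (hsc1.div hnnc hnn0) (by
      intro z
      have := hnn z
      rw [norm_div, norm_div, Complex.norm_real, Real.norm_of_nonneg this.le, div_pow, div_pow,
        ← add_div, Real.sq_sqrt (hnn2 z).le]
      exact div_self (hnn2 z).ne')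
  have hw0 := hw0.analyticOn
  have hw1 := hw1.analyticOn
  let v0 : ℂ → ℂ := fun z => Q z 0 0 * w0 z + Q z 0 1 * w1 z
  let v1 : ℂ → ℂ := fun z => Q z 1 0 * w0 z + Q z 1 1 * w1 z
  have hv0 : AnalyticOn ℝ v0 U := ((hQan 0 0).mul hw0).add ((hQan 0 1).mul hw1)
  have hv1 : AnalyticOn ℝ v1 U := ((hQan 1 0).mul hw0).add ((hQan 1 1).mul hw1)
  let D : ℂ → ℂ := fun z => v0 z * starRingEnd ℂ (v0 z) + v1 z * starRingEnd ℂ (v1 z)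
  have hDan : AnalyticOn ℝ D U := (hv0.mul (conj_an _ hv0)).add (hv1.mul (conj_an _ hv1))
  have hD : ∀ z ∈ U, D z ≠ 0 := by
    intro z hz h
    have h' : ‖v0 z‖ ^ 2 + ‖v1 z‖ ^ 2 = 0 := by
      simp only [D, Complex.mul_conj'] at h
      exact_mod_cast h
    have e0 : ‖v0 z‖ ^ 2 = 0 := by nlinarith [sq_nonneg ‖v0 z‖, sq_nonneg ‖v1 z‖]
    have e1 : ‖v1 z‖ ^ 2 = 0 := by nlinarith [sq_nonneg ‖v0 z‖, sq_nonneg ‖v1 z‖]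
    simp at e0 e1
    have hz1 := hw ⟨z, hz⟩
    have hq := hQs ⟨z, hz⟩
    have q0 := congrArg (starRingEnd ℂ) (congrFun hq 0)
    have q1 := congrArg (starRingEnd ℂ) (congrFun hq 1)
    simp only [Matrix.mulVec, dotProduct, Fin.sum_univ_two, Pi.smul_apply, smul_eq_mul, map_add,
      map_mul, Complex.conj_ofReal] at q0 q1
    have hH : ∀ i j, starRingEnd ℂ (Q z i j) = Q z j i := fun i j => by
      conv_rhs => rw [← hQH z]
      rfl
    rw [hH, hH] at q0 q1
    simp only [v0, v1] at e0 e1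
    have key : (τ z : ℂ) * (starRingEnd ℂ (s ⟨z, hz⟩ 0) * w0 z + starRingEnd ℂ (s ⟨z, hz⟩ 1) * w1 z)
        = 0 := by
      linear_combination (-w0 z) * q0 - w1 z * q1 + starRingEnd ℂ (s ⟨z, hz⟩ 0) * e0 +
        starRingEnd ℂ (s ⟨z, hz⟩ 1) * e1
    have key2 := (mul_eq_zero.1 key).resolve_left (by simpa using (hτ z hz).ne')
    have : starRingEnd ℂ (s ⟨z, hz⟩ 0 / nn ⟨z, hz⟩) * w0 z +
        starRingEnd ℂ (s ⟨z, hz⟩ 1 / nn ⟨z, hz⟩) * w1 z = 0 := by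
      rw [map_div₀, map_div₀, Complex.conj_ofReal, div_mul_eq_mul_div, div_mul_eq_mul_div,
        ← add_div, key2, zero_div]
    simp only at hz1
    rw [this] at hz1
    simp at hz1
  refine ⟨fun z => !![v1 z / D z, - (v0 z / D z); starRingEnd ℂ (v0 z), starRingEnd ℂ (v1 z)],
    ?_, ?_, ?_⟩
  · intro i j
    fin_cases i <;> fin_cases j <;> simp
    · exact hv1.div hDan hD
    · exact (hv0.div hDan hD).neg
    · exact conj_an _ hv0
    · exact conj_an _ hv1
  · intro z hz
    have := hD z hz
    rw [Matrix.det_fin_two_of]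
    field_simp
    simp only [D]; ring
  · intro z hz i
    have h0 := hXQ z hz
    have hx : ∀ i, X z i 0 * v0 z + X z i 1 * v1 z = 0 := by
      intro i
      have a0 := congrFun (congrFun h0 i) 0
      have a1 := congrFun (congrFun h0 i) 1
      simp only [Matrix.mul_apply, Fin.sum_univ_two, Matrix.zero_apply] at a0 a1
      simp only [v0, v1]
      linear_combination w0 z * a0 + w1 z * a1
    have b0 := hx 0
    have b1 := hx 1
    rw [Matrix.mul_assoc]
    have : ∀ k, (X z * (!![v1 z / D z, - (v0 z / D z); starRingEnd ℂ (v0 z),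
        starRingEnd ℂ (v1 z)])ᴴ) k 1 = 0 := by
      intro k
      simpa [Matrix.mul_apply, Fin.sum_univ_two] using hx k
    rw [Matrix.mul_apply]
    exact Finset.sum_eq_zero fun k _ => by rw [this, mul_zero]
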